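/- Let M be a λ-term. If M is head-normalizable (i.e., M β-reduces in finitely many steps to a head-normal form), then there exists a rigid term a ∈ T_r(M) such that NF(a) ≠ 0. -/

import Mathlib

/-! Ordinary λ-terms, in de Bruijn notation. -/
inductive Lam : Type
  | var : ℕ → Lam
  | lam : Lam → Lam
  | app : Lam → Lam → Lam
  deriving DecidableEq

namespace Lam

/-- Shift the free indices `≥ d` up by one. -/
def lift (d : ℕ) : Lam → Lam
  | var n => if n < d then var n else var (n + 1)
  | lam M => lam (lift (d + 1) M)
  | app P Q => app (lift d P) (lift d Q)

/-- Capture-avoiding substitution of `N` for the free variable `k`. -/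
def subst : Lam → ℕ → Lam → Lam
  | var n, k, N => if n = k then N else if k < n then var (n - 1) else var n
  | lam M, k, N => lam (subst M (k + 1) (lift 0 N))
  | app P Q, k, N => app (subst P k N) (subst Q k N)

/-- Number of free occurrences of the variable `k`. -/
def count (k : ℕ) : Lam → ℕ
  | var n => if n = k then 1 else 0
  | lam M => count (k + 1) M
  | app P Q => count k P + count k Q

/-- One-step β-reduction. -/
inductive Beta : Lam → Lam → Prop
  | beta (M N : Lam) : Beta (app (lam M) N) (subst M 0 N)
  | lam {M M'} : Beta M M' → Beta (lam M) (lam M')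
  | appL {P P' Q} : Beta P P' → Beta (app P Q) (app P' Q)
  | appR {P Q Q'} : Beta Q Q' → Beta (app P Q) (app P Q')

/-- The head of the application spine is a variable, with no λ on the spine. -/
def neutral : Lam → Bool
  | var _ => true
  | lam _ => false
  | app P _ => neutral P

/-- Head-normal forms: `λx₁…λxₘ. x N₁ … Nₙ`. -/
def isHNF : Lam → Prop
  | var _ => True
  | lam M => isHNF M
  | app P _ => neutral P = true

/-- The head-reduction function `H`: contracts the head redex, identity on head-normal
forms. -/
def H : Lam → Lam
  | var n => var n
  | lam M => lam (H M)
  | app (lam P) Q => subst P 0 Q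
  | app (var n) Q => app (var n) Q
  | app (app P₁ P₂) Q => app (H (app P₁ P₂)) Q

/-- The left-parallel reduction function `L`: identity on β-normal forms, propagated to
the arguments on head-normal forms, contraction of the head redex otherwise. -/
def L : Lam → Lam
  | var n => var n
  | lam M => lam (L M)
  | app (lam P) Q => subst P 0 Q
  | app (var n) Q => app (var n) (L Q)
  | app (app P₁ P₂) Q =>
      if neutral (app P₁ P₂) then app (L (app P₁ P₂)) (L Q)
      else app (L (app P₁ P₂)) Q

/-- Iterated application `M N₁ … Nₙ`. -/
def mkApps (M : Lam) (Ns : List Lam) : Lam := Ns.foldl app M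

/-- All free variables are `< d`. -/
def ClosedAt (d : ℕ) : Lam → Prop
  | var n => n < d
  | lam M => ClosedAt (d + 1) M
  | app P Q => ClosedAt d P ∧ ClosedAt d Q

/-- `M` is head-normalizable: it β-reduces in finitely many steps to a head-normal form. -/
def HeadNormalizable (M : Lam) : Prop :=
  ∃ N, Relation.ReflTransGen Beta M N ∧ isHNF N

/-- `M` is a β-normal form: it contains no β-redex, i.e. admits no β-step. -/
def BetaNF (M : Lam) : Prop := ¬∃ N, Beta M N

/-- `M` is β-normalizable: it β-reduces in finitely many steps to a β-normal form. -/
def BetaNormalizable (M : Lam) : Prop :=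
  ∃ N, Relation.ReflTransGen Beta M N ∧ BetaNF N

/-- `M` is strongly β-normalizable: no infinite β-reduction sequence starts from `M`. -/
def StronglyNormalizable (M : Lam) : Prop := Acc (fun N M' => Beta M' N) M

end Lam

/-! Rigid resource terms (the nonzero ones), in de Bruijn notation:
`a ::= x | λx.a | ⟨c⟩d⃗` with `d⃗` a list of rigid terms.
The term `0` is represented by `none : Option Rig`. -/
inductive Rig : Type
  | var : ℕ → Rig
  | lam : Rig → Rig
  | app : Rig → List Rig → Rig

namespace Rig

mutual
/-- Number of free occurrences of the variable `k` in a rigid term. -/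
def countR (k : ℕ) : Rig → ℕ
  | var n => if n = k then 1 else 0
  | lam a => countR (k + 1) a
  | app c ds => countR k c + countRList k ds
termination_by a => sizeOf a

def countRList (k : ℕ) : List Rig → ℕ
  | [] => 0
  | d :: ds => countR k d + countRList k ds
termination_by ds => sizeOf ds
end

mutual
/-- Shift the free indices `≥ d` up by one. -/
def liftR (d : ℕ) : Rig → Rig
  | var n => if n < d then var n else var (n + 1)
  | lam a => lam (liftR (d + 1) a)
  | app c ds => app (liftR d c) (liftRList d ds)
termination_by a => sizeOf a

def liftRList (d : ℕ) : List Rig → List Rig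
  | [] => []
  | a :: as => liftR d a :: liftRList d as
termination_by as => sizeOf as
end

mutual
/-- Rigid substitution `a[b⃗/k]`: the list `b⃗` is distributed, in order, over the
free occurrences of the variable `k`; the result is `none` (i.e. `0`) when
`|b⃗| ≠ n_k(a)`. -/
def rsubst (k : ℕ) : Rig → List Rig → Option Rig
  | var n, bs =>
      if n = k then (match bs with | [b] => some b | _ => none)
      else (match bs with
            | [] => some (if k < n then var (n - 1) else var n)
            | _ => none)
  | lam a, bs => (rsubst (k + 1) a (liftRList 0 bs)).map lam
  | app c ds, bs =>
      match rsubst k c (bs.take (countR k c)), rsubstList k ds (bs.drop (countR k c)) with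
      | some c', some ds' => some (app c' ds')
      | _, _ => none
termination_by a _ => sizeOf a

def rsubstList (k : ℕ) : List Rig → List Rig → Option (List Rig)
  | [], bs => if bs.isEmpty then some [] else none
  | d :: ds, bs =>
      match rsubst k d (bs.take (countR k d)), rsubstList k ds (bs.drop (countR k d)) with
      | some d', some ds' => some (d' :: ds')
      | _, _ => none
termination_by ds _ => sizeOf ds
end

/-- One-step rigid resource reduction `→_r` (contextual closure of
`⟨λx.a⟩b⃗ →_r a[b⃗/x]`); the result may be `0` (i.e. `none`), which annihilates
the surrounding context. -/
inductive RStep : Rig → Option Rig → Prop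
  | beta (a : Rig) (bs : List Rig) : RStep (app (lam a) bs) (rsubst 0 a bs)
  | lam {a r} : RStep a r → RStep (lam a) (r.map lam)
  | head {c r} (ds : List Rig) : RStep c r → RStep (app c ds) (r.map (fun c' => app c' ds))
  | arg {d r} (c : Rig) (ds₁ ds₂ : List Rig) :
      RStep d r → RStep (app c (ds₁ ++ d :: ds₂)) (r.map (fun d' => app c (ds₁ ++ d' :: ds₂)))

/-- `→_r` on rigid terms extended with `0`; `0` is inert. -/
inductive RStepO : Option Rig → Option Rig → Prop
  | mk {a r} : RStep a r → RStepO (some a) r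

/-- `r` is a `→_r`-normal form (`0` is one). -/
def RNormal (r : Option Rig) : Prop := ¬∃ r', RStepO r r'

/-- The head of the application spine is a variable, with no λ on the spine. -/
def rNeutral : Rig → Bool
  | var _ => true
  | lam _ => false
  | app c _ => rNeutral c

/-- Rigid head-normal forms among nonzero terms: `λx₁…λxₘ.⟨…⟨x⟩d⃗₁…⟩d⃗ₙ`
(the term `0` is a head-normal form, but it is treated separately). -/
def rIsHNF : Rig → Prop
  | var _ => True
  | lam a => rIsHNF a
  | app c _ => rNeutral c = true

/-- The rigid head-reduction function `H_r`: contracts the head redex, identity on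
head-normal forms; the result may be `0` (i.e. `none`). -/
def Hr : Rig → Option Rig
  | var n => some (var n)
  | lam a => (Hr a).map lam
  | app (lam a) bs => rsubst 0 a bs
  | app (var n) ds => some (app (var n) ds)
  | app (app c₁ c₂) ds => (Hr (app c₁ c₂)).map (fun c' => app c' ds)

/-- `H_r` extended to terms-or-`0`. -/
def HrO : Option Rig → Option Rig := fun r => r.bind Hr

mutual
/-- The rigid left-parallel reduction function `L_r`: identity on `→_r`-normal forms,
applied componentwise to the argument lists on head-normal forms, contraction of the
head redex otherwise; the result may be `0` (i.e. `none`). -/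
def Lr : Rig → Option Rig
  | var n => some (var n)
  | lam a => (Lr a).map lam
  | app (lam a) bs => rsubst 0 a bs
  | app (var n) ds => (LrList ds).map (fun ds' => app (var n) ds')
  | app (app c₁ c₂) ds =>
      if rNeutral (app c₁ c₂) then
        match Lr (app c₁ c₂), LrList ds with
        | some c', some ds' => some (app c' ds')
        | _, _ => none
      else (Lr (app c₁ c₂)).map (fun c' => app c' ds)
termination_by a => sizeOf a

def LrList : List Rig → Option (List Rig)
  | [] => some []
  | d :: ds =>
      match Lr d, LrList ds with
      | some d', some ds' => some (d' :: ds')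
      | _, _ => none
termination_by ds => sizeOf ds
end

/-- `L_r` extended to terms-or-`0`. -/
def LrO : Option Rig → Option Rig := fun r => r.bind Lr

/-- Positive resource terms: no empty list/multiset occurs as the argument of an
application. -/
inductive rPositive : Rig → Prop
  | var (n : ℕ) : rPositive (var n)
  | lam {a} : rPositive a → rPositive (lam a)
  | app {c : Rig} {ds : List Rig} :
      rPositive c → ds ≠ [] → (∀ d ∈ ds, rPositive d) → rPositive (app c ds)

end Rig

/-- The rigid expansion `T_r(M)` of a λ-term (equivalently, the support of its Taylor
expansion, with multisets presented by lists: `Texp M` is closed under permutation of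
argument lists). -/
def Texp : Lam → Set Rig
  | Lam.var n => {Rig.var n}
  | Lam.lam M => {a | ∃ b ∈ Texp M, a = Rig.lam b}
  | Lam.app P Q => {a | ∃ c ∈ Texp P, ∃ ds : List Rig, (∀ d ∈ ds, d ∈ Texp Q) ∧ a = Rig.app c ds}

namespace Rig

/-- The support of the `n`-linear substitution `∂_k a · b̄`, where the multiset `b̄` is
presented by the list `bs`: the finite formal sum (multiset) of all nonzero results of
rigid substitutions along bijective assignments, i.e. permutations of `bs`. -/
def permSubst (k : ℕ) (a : Rig) (bs : List Rig) : Multiset Rig :=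
  ↑(bs.permutations.filterMap (fun bs' => rsubst k a bs'))

/-- One step of non-erasing ε-resource reduction `→^{¬e}_{∂ε}` out of a single resource
term, producing a finite formal sum (a multiset) of resource terms: non-erasing resource
β-steps `⟨λx.a⟩b̄ → ∂_x a · b̄` (with `x ∈ FV(a)`) and resource σ₁-steps, under any
context. -/
inductive NEStep : Rig → Multiset Rig → Prop
  | beta {a : Rig} (bs : List Rig) :
      0 < countR 0 a → NEStep (app (lam a) bs) (permSubst 0 a bs)
  | sigma (a : Rig) (ts qs : List Rig) :
      NEStep (app (app (lam a) ts) qs) {app (lam (app a (liftRList 0 qs))) ts}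
  | lam {a σ} : NEStep a σ → NEStep (lam a) (σ.map lam)
  | head {c σ} (ds : List Rig) : NEStep c σ → NEStep (app c ds) (σ.map (fun c' => app c' ds))
  | arg {d σ} (c : Rig) (ds₁ ds₂ : List Rig) :
      NEStep d σ → NEStep (app c (ds₁ ++ d :: ds₂)) (σ.map (fun d' => app c (ds₁ ++ d' :: ds₂)))

/-- Non-erasing ε-resource reduction on finite formal sums, extended by linearity. -/
def NEStepSum (σ τ : Multiset Rig) : Prop :=
  ∃ (a : Rig) (ρ υ : Multiset Rig), σ = a ::ₘ ρ ∧ NEStep a υ ∧ τ = υ + ρ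

/-- `σ` is a `→^{¬e}_{∂ε}`-normal form. -/
def NENormal (σ : Multiset Rig) : Prop := ¬∃ τ, NEStepSum σ τ

end Rig

/-- One step of non-erasing ε-reduction on λ-terms: non-erasing β-steps
`(λx.M)N → M[N/x]` (with `x ∈ FV(M)`) together with σ₁-steps
`((λx.M)N)P → (λx.MP)N` (`x ∉ FV(P)`), under any context. -/
inductive NEeps : Lam → Lam → Prop
  | beta {M : Lam} (N : Lam) :
      0 < Lam.count 0 M → NEeps (Lam.app (Lam.lam M) N) (Lam.subst M 0 N)
  | sigma (M N P : Lam) :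
      NEeps (Lam.app (Lam.app (Lam.lam M) N) P)
        (Lam.app (Lam.lam (Lam.app M (Lam.lift 0 P))) N)
  | lam {M M'} : NEeps M M' → NEeps (Lam.lam M) (Lam.lam M')
  | appL {P P' Q} : NEeps P P' → NEeps (Lam.app P Q) (Lam.app P' Q)
  | appR {P Q Q'} : NEeps Q Q' → NEeps (Lam.app P Q) (Lam.app P Q')

/-- The set `S` of λ-terms. -/
inductive SLam : Lam → Prop
  | varApp (n : ℕ) (Ms : List Lam) :
      (∀ M ∈ Ms, SLam M) → SLam (Lam.mkApps (Lam.var n) Ms)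
  | lam {M} : SLam M → SLam (Lam.lam M)
  | redex (M₀ M₁ : Lam) (Ms : List Lam) :
      SLam M₁ → SLam (Lam.mkApps (Lam.subst M₀ 0 M₁) Ms) →
      SLam (Lam.mkApps (Lam.app (Lam.lam M₀) M₁) Ms)

/-- λI-terms: every abstraction binds a variable occurring free in its body. -/
def LamI : Lam → Prop
  | Lam.var _ => True
  | Lam.lam M => LamI M ∧ 0 < Lam.count 0 M
  | Lam.app P Q => LamI P ∧ LamI Q

namespace RigProof

open Rig

/-- Reduction step to a nonzero term. -/
def Step (a b : Rig) : Prop := RStep a (some b)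

abbrev Steps := Relation.ReflTransGen Step

lemma texp_lift (N : Lam) : ∀ (d : ℕ) (b : Rig), b ∈ Texp (Lam.lift d N) →
    ∃ b' ∈ Texp N, liftR d b' = b := by
  induction N with
  | var n =>
    intro d b hb
    refine ⟨Rig.var n, rfl, ?_⟩
    rw [liftR]
    unfold Lam.lift at hb
    split_ifs at hb ⊢ with h
    · exact hb.symm
    · exact hb.symm
  | lam M ih =>
    intro d b hb
    obtain ⟨c, hc, rfl⟩ := hb
    obtain ⟨c', hc', rfl⟩ := ih _ _ hc
    exact ⟨Rig.lam c', ⟨c', hc', rfl⟩, by rw [liftR]⟩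
  | app P Q ihP ihQ =>
    intro d b hb
    obtain ⟨c, hc, ds, hds, rfl⟩ := hb
    obtain ⟨c', hc', rfl⟩ := ihP _ _ hc
    have : ∃ ds' : List Rig, (∀ x ∈ ds', x ∈ Texp Q) ∧ liftRList d ds' = ds := by
      clear hc hc'
      induction ds with
      | nil => exact ⟨[], by simp, by rw [liftRList]⟩
      | cons e es ih =>
        obtain ⟨es', h1, h2⟩ := ih (fun x hx => hds x (List.mem_cons_of_mem _ hx))
        obtain ⟨e', he', h3⟩ := ihQ d e (hds e List.mem_cons_self)
        refine ⟨e' :: es', ?_, by rw [liftRList, h2, h3]⟩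
        intro x hx
        rcases List.mem_cons.1 hx with rfl | hx
        · exact he'
        · exact h1 x hx
    obtain ⟨ds', h1, h2⟩ := this
    exact ⟨Rig.app c' ds', ⟨c', hc', ds', h1, rfl⟩, by rw [liftR, h2]⟩

lemma texp_lift_list (N : Lam) (d : ℕ) (bs : List Rig)
    (h : ∀ b ∈ bs, b ∈ Texp (Lam.lift d N)) :
    ∃ bs' : List Rig, (∀ x ∈ bs', x ∈ Texp N) ∧ liftRList d bs' = bs ∧
      bs'.length = bs.length := by
  induction bs with
  | nil => exact ⟨[], by simp, by rw [liftRList], rfl⟩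
  | cons e es ih =>
    obtain ⟨es', h1, h2, h4⟩ := ih (fun x hx => h x (List.mem_cons_of_mem _ hx))
    obtain ⟨e', he', h3⟩ := texp_lift N d e (h e List.mem_cons_self)
    refine ⟨e' :: es', ?_, by rw [liftRList, h2, h3], by simp [h4]⟩
    intro x hx
    rcases List.mem_cons.1 hx with rfl | hx
    · exact he'
    · exact h1 x hx

lemma texp_subst (M : Lam) : ∀ (k : ℕ) (N : Lam) (a' : Rig), a' ∈ Texp (Lam.subst M k N) →
    ∃ a ∈ Texp M, ∃ bs : List Rig, (∀ b ∈ bs, b ∈ Texp N) ∧ bs.length = countR k a ∧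
      rsubst k a bs = some a' := by
  induction M with
  | var n =>
    intro k N a' h
    unfold Lam.subst at h
    refine ⟨Rig.var n, rfl, ?_⟩
    by_cases hn : n = k
    · rw [if_pos hn] at h
      exact ⟨[a'], by simpa using h, by rw [countR]; simp [hn], by rw [rsubst]; simp [hn]⟩
    · rw [if_neg hn] at h
      refine ⟨[], by simp, by rw [countR]; simp [hn], ?_⟩
      rw [rsubst]
      split_ifs at h ⊢ with h2
      · simpa using h.symm
      · simpa using h.symm
  | lam M ih =>
    intro k N a' h
    obtain ⟨c, hc, rfl⟩ := h
    obtain ⟨a, ha, bs, hbs, hl, hs⟩ := ih _ _ _ hc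
    obtain ⟨bs', h1, h2, h3⟩ := texp_lift_list N 0 bs hbs
    exact ⟨Rig.lam a, ⟨a, ha, rfl⟩, bs', h1, by rw [countR, h3, hl],
      by rw [rsubst, h2, hs]; rfl⟩
  | app P Q ihP ihQ =>
    intro k N a' h
    obtain ⟨c, hc, ds, hds, rfl⟩ := h
    obtain ⟨a, ha, bs, hbs, hl, hs⟩ := ihP _ _ _ hc
    have : ∃ es : List Rig, (∀ x ∈ es, x ∈ Texp Q) ∧ ∃ bs : List Rig,
        (∀ b ∈ bs, b ∈ Texp N) ∧ bs.length = countRList k es ∧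
        rsubstList k es bs = some ds := by
      clear hc
      induction ds with
      | nil => exact ⟨[], by simp, [], by simp, by rw [countRList]; rfl, by rw [rsubstList]; rfl⟩
      | cons e es ih =>
        obtain ⟨es', h1, bs1, h2, h3, h4⟩ := ih (fun x hx => hds x (List.mem_cons_of_mem _ hx))
        obtain ⟨e', he', bs2, h5, h6, h7⟩ := ihQ k N e (hds e List.mem_cons_self)
        refine ⟨e' :: es', ?_, bs2 ++ bs1, ?_, ?_, ?_⟩
        · intro x hx
          rcases List.mem_cons.1 hx with rfl | hx
          · exact he'
          · exact h1 x hx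
        · intro x hx
          rcases List.mem_append.1 hx with hx | hx
          · exact h5 x hx
          · exact h2 x hx
        · rw [countRList, List.length_append, h3, h6]
        · rw [rsubstList, ← h6, List.take_left, List.drop_left, h7, h4]
    obtain ⟨es, h1, bs', h2, h3, h4⟩ := this
    refine ⟨Rig.app a es, ⟨a, ha, es, h1, rfl⟩, bs ++ bs', ?_, ?_, ?_⟩
    · intro x hx
      rcases List.mem_append.1 hx with hx | hx
      · exact hbs x hx
      · exact h2 x hx
    · rw [countR, List.length_append, hl, h3]
    · rw [rsubst, ← hl, List.take_left, List.drop_left, hs, h4]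

lemma rtgLift {α β : Type} {r : α → α → Prop} {p : β → β → Prop} (f : α → β)
    (h : ∀ a b, r a b → p (f a) (f b)) {a b : α} (hab : Relation.ReflTransGen r a b) :
    Relation.ReflTransGen p (f a) (f b) := by
  induction hab with
  | refl => exact Relation.ReflTransGen.refl
  | tail _ h1 ih => exact ih.tail (h _ _ h1)

lemma steps_lam {a b : Rig} (h : Steps a b) : Steps (Rig.lam a) (Rig.lam b) :=
  rtgLift Rig.lam (fun _ _ h => RStep.lam h) h

lemma steps_head {a b : Rig} (ds : List Rig) (h : Steps a b) :
    Steps (Rig.app a ds) (Rig.app b ds) :=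
  rtgLift (fun c => Rig.app c ds) (fun _ _ h => RStep.head ds h) h

lemma steps_arg {a b : Rig} (c : Rig) (ds es : List Rig) (h : Steps a b) :
    Steps (Rig.app c (ds ++ a :: es)) (Rig.app c (ds ++ b :: es)) :=
  rtgLift (fun x => Rig.app c (ds ++ x :: es))
    (fun _ _ h => RStep.arg c ds es h) h

lemma steps_args (c : Rig) {as bs : List Rig} (h : List.Forall₂ Steps as bs) :
    ∀ pre : List Rig, Steps (Rig.app c (pre ++ as)) (Rig.app c (pre ++ bs)) := by
  induction h with
  | nil => intro pre; exact Relation.ReflTransGen.refl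
  | @cons a b as bs h1 _ ih =>
    intro pre
    refine (steps_arg c pre as h1).trans ?_
    have := ih (pre ++ [b])
    simpa using this

lemma pull_step {M M' : Lam} (h : Lam.Beta M M') :
    ∀ a' ∈ Texp M', ∃ a ∈ Texp M, Steps a a' := by
  induction h with
  | beta M N =>
    intro a' ha'
    obtain ⟨a, ha, bs, hbs, _, hs⟩ := texp_subst M 0 N a' ha'
    refine ⟨Rig.app (Rig.lam a) bs, ⟨Rig.lam a, ⟨a, ha, rfl⟩, bs, hbs, rfl⟩, ?_⟩
    refine Relation.ReflTransGen.single ?_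
    unfold Step
    rw [← hs]
    exact RStep.beta a bs
  | lam _ ih =>
    rintro _ ⟨c, hc, rfl⟩
    obtain ⟨a, ha, hs⟩ := ih c hc
    exact ⟨Rig.lam a, ⟨a, ha, rfl⟩, steps_lam hs⟩
  | appL _ ih =>
    rintro _ ⟨c, hc, ds, hds, rfl⟩
    obtain ⟨a, ha, hs⟩ := ih c hc
    exact ⟨Rig.app a ds, ⟨a, ha, ds, hds, rfl⟩, steps_head ds hs⟩
  | @appR P Q Q' _ ih =>
    rintro _ ⟨c, hc, ds, hds, rfl⟩
    have : ∃ es : List Rig, (∀ x ∈ es, x ∈ Texp Q) ∧ List.Forall₂ Steps es ds := by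
      induction ds with
      | nil => exact ⟨[], by simp, List.Forall₂.nil⟩
      | cons e es ihl =>
        obtain ⟨es', h1, h2⟩ := ihl (fun x hx => hds x (List.mem_cons_of_mem _ hx))
        obtain ⟨e', he', h3⟩ := ih e (hds e List.mem_cons_self)
        refine ⟨e' :: es', ?_, List.Forall₂.cons h3 h2⟩
        intro x hx
        rcases List.mem_cons.1 hx with rfl | hx
        · exact he'
        · exact h1 x hx
    obtain ⟨es, h1, h2⟩ := this
    exact ⟨Rig.app c es, ⟨c, hc, es, h1, rfl⟩, steps_args c h2 []⟩

lemma pull_steps {M M' : Lam} (h : Relation.ReflTransGen Lam.Beta M M') :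
    ∀ a' ∈ Texp M', ∃ a ∈ Texp M, Steps a a' := by
  induction h with
  | refl => exact fun a' ha' => ⟨a', ha', Relation.ReflTransGen.refl⟩
  | tail _ hs ih =>
    intro a' ha'
    obtain ⟨b, hb, h1⟩ := pull_step hs a' ha'
    obtain ⟨a, ha, h2⟩ := ih b hb
    exact ⟨a, ha, h2.trans h1⟩

lemma normal_app {c : Rig} (hc : ∀ r, ¬ RStep c r) (hn : rNeutral c = true) (r : Option Rig) :
    ¬ RStep (Rig.app c []) r := by
  intro h
  generalize he : Rig.app c [] = e at h
  cases h with
  | beta a bs =>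
    injection he with h1 h2
    subst h1
    simp [rNeutral] at hn
  | lam _ => cases he
  | head ds h =>
    injection he with h1 h2
    subst h1
    exact hc _ h
  | arg c ds es h =>
    injection he with h1 h2
    simp at h2

lemma neutral_normal (P : Lam) (h : Lam.neutral P = true) :
    ∃ a ∈ Texp P, rNeutral a = true ∧ ∀ r, ¬ RStep a r := by
  induction P with
  | var n => exact ⟨Rig.var n, rfl, rfl, fun r hr => by cases hr⟩
  | lam M _ => simp [Lam.neutral] at h
  | app P Q ih _ =>
    obtain ⟨c, hc, hn, hr⟩ := ih h
    exact ⟨Rig.app c [], ⟨c, hc, [], by simp, rfl⟩, hn, normal_app hr hn⟩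

lemma hnf_normal (P : Lam) (h : Lam.isHNF P) :
    ∃ a ∈ Texp P, ∀ r, ¬ RStep a r := by
  induction P with
  | var n => exact ⟨Rig.var n, rfl, fun r hr => by cases hr⟩
  | lam M ih =>
    obtain ⟨c, hc, hr⟩ := ih h
    refine ⟨Rig.lam c, ⟨c, hc, rfl⟩, ?_⟩
    intro r h
    cases h with
    | lam h => exact hr _ h
  | app P Q _ _ =>
    obtain ⟨a, ha, _, hr⟩ := neutral_normal (Lam.app P Q) h
    exact ⟨a, ha, hr⟩

end RigProof

/-- if `M` is head-normalizable then some `a ∈ T_r(M)` has `NF(a) ≠ 0`,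
i.e. `a` `→_r`-reduces to a normal form that is a (nonzero) rigid term. -/
theorem nonzero_NF_of_head_normalizable {M : Lam} (h : Lam.HeadNormalizable M) :
    ∃ a ∈ Texp M, ∃ b : Rig,
      Relation.ReflTransGen Rig.RStepO (some a) (some b) ∧ Rig.RNormal (some b) := by
  obtain ⟨N, hN, hh⟩ := h
  obtain ⟨b, hb, hr⟩ := RigProof.hnf_normal N hh
  obtain ⟨a, ha, hs⟩ := RigProof.pull_steps hN b hb
  refine ⟨a, ha, b, ?_, ?_⟩
  · exact RigProof.rtgLift some (fun _ _ h => Rig.RStepO.mk h) hs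
  · rintro ⟨r, hr'⟩
    cases hr' with
    | mk h => exact hr _ h
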